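/- Let B be a nilpotent finite-dimensional left Leibniz algebra with dim B ≥ 2 whose right center R₁(B) = {r ∈ B : Br = 0} is one-dimensional. Then B cannot be an ideal of any left Leibniz algebra A with B contained in the Frattini subalgebra Φ(A). -/

import Mathlib

open Polynomial LinearMap

/-- A (left) Leibniz algebra structure on the `K`-vector space `A`:
a bilinear multiplication satisfying `x(yz) = (xy)z + y(xz)`. -/
structure LeibnizMul (K A : Type*) [Field K] [AddCommGroup A] [Module K A] where
  mul : A →ₗ[K] A →ₗ[K] A
  leibniz : ∀ x y z, mul x (mul y z) = mul (mul x y) z + mul y (mul x z)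

namespace LeibnizMul

variable {K A : Type*} [Field K] [AddCommGroup A] [Module K A]

/-- The product of two subspaces: the span of all products `s·t`, `s ∈ S`, `t ∈ T`. -/
def mulSub (m : LeibnizMul K A) (S T : Submodule K A) : Submodule K A :=
  Submodule.span K (Set.image2 (fun x y => m.mul x y) (S : Set A) (T : Set A))

/-- Relative lower central series of the subalgebra `S`: `lcsIn m S n = S^(n+1)`,
i.e. `lcsIn m S 0 = S` and `lcsIn m S (n+1) = S · (lcsIn m S n)`. -/
def lcsIn (m : LeibnizMul K A) (S : Submodule K A) : ℕ → Submodule K A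
  | 0 => S
  | (n+1) => m.mulSub S (m.lcsIn S n)

/-- `A` is nilpotent: some term of the lower central series vanishes. -/
def IsNilpotent (m : LeibnizMul K A) : Prop := ∃ n, m.lcsIn ⊤ n = ⊥

/-- `S` is a subalgebra: a subspace closed under multiplication. -/
def IsSubalg (m : LeibnizMul K A) (S : Submodule K A) : Prop :=
  ∀ x ∈ S, ∀ y ∈ S, m.mul x y ∈ S

/-- `S` is a (two-sided) ideal. -/
def IsIdeal (m : LeibnizMul K A) (S : Submodule K A) : Prop :=
  ∀ (x : A), ∀ y ∈ S, m.mul x y ∈ S ∧ m.mul y x ∈ S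

/-- `M` is a maximal (proper) subalgebra. -/
def IsMaxSubalg (m : LeibnizMul K A) (M : Submodule K A) : Prop :=
  m.IsSubalg M ∧ M ≠ ⊤ ∧ ∀ S, m.IsSubalg S → M < S → S = ⊤

/-- The Frattini subalgebra: the intersection of all maximal subalgebras. -/
def frattini (m : LeibnizMul K A) : Submodule K A :=
  sInf {M | m.IsMaxSubalg M}

/-- The subalgebra generated by a single element `a`. -/
def subalgGen (m : LeibnizMul K A) (a : A) : Submodule K A :=
  sInf {S | m.IsSubalg S ∧ a ∈ S}

/-- The normal closure of a subspace: the smallest ideal containing it. -/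
def normalClosure (m : LeibnizMul K A) (S : Submodule K A) : Submodule K A :=
  sInf {I | m.IsIdeal I ∧ S ≤ I}

/-- The normalizer of a subspace `C`: all `x` with `x·c ∈ C` and `c·x ∈ C` for all `c ∈ C`. -/
def normalizer (m : LeibnizMul K A) (C : Submodule K A) : Submodule K A :=
  ⨅ c : C, (Submodule.comap (m.mul.flip (c : A)) C ⊓ Submodule.comap (m.mul (c : A)) C)

/-- The center of the subalgebra `S`: all `z ∈ S` with `z·x = x·z = 0` for all `x ∈ S`. -/
def centerIn (m : LeibnizMul K A) (S : Submodule K A) : Submodule K A :=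
  S ⊓ ⨅ x : S, (LinearMap.ker (m.mul.flip (x : A)) ⊓ LinearMap.ker (m.mul (x : A)))

/-- All `z ∈ S` with `z·x ∈ T` and `x·z ∈ T` for all `x ∈ S`. -/
def relCentralizer (m : LeibnizMul K A) (S T : Submodule K A) : Submodule K A :=
  S ⊓ ⨅ x : S, (Submodule.comap (m.mul.flip (x : A)) T ⊓ Submodule.comap (m.mul (x : A)) T)

/-- The upper central series of the subalgebra `S`:
`Z₀ = 0`, `Z_{j+1} = {z ∈ S : zS ⊆ Z_j and Sz ⊆ Z_j}`. -/
def ucsIn (m : LeibnizMul K A) (S : Submodule K A) : ℕ → Submodule K A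
  | 0 => ⊥
  | (j+1) => m.relCentralizer S (m.ucsIn S j)

/-- The right center `{r : A·r = 0}`. -/
def rightCenter (m : LeibnizMul K A) : Submodule K A := LinearMap.ker m.mul.flip

/-- Left-normed powers of `a`: `lpow m a k = a^(k+1)`. -/
def lpow (m : LeibnizMul K A) (a : A) : ℕ → A
  | 0 => a
  | (k+1) => m.mul a (m.lpow a k)

/-- The Fitting null component of left multiplication by `a`. -/
def fittingNull (m : LeibnizMul K A) (a : A) : Submodule K A :=
  ⨆ k, LinearMap.ker ((m.mul a) ^ k)

end LeibnizMul

/-!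
Write `R₁ ⊆ R₂` for the first two right centers of `B`. Left multiplications by elements of `A`
restrict to derivations of `B`, so they preserve `R₁` and `R₂`, and nilpotency gives `R₁ ≠ R₂`.
Choose a complement `V` of `R₁` in `B`, so that `W = R₂ ∩ V` is a nonzero complement of `R₁` in
`R₂`. An element `w ∈ W` with `Bw = 0` lies in `R₁ ∩ W = 0`; hence the pairing `(b, w) ↦ bw` of `B`
and `W` with values in the line `R₁` is nondegenerate on the side of `W`, and every linear map
`W → R₁` is left multiplication by some element of `B`.

Consequently, the map sending `a ∈ A` to the `R₁`-component of its action on `W` is already onto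
`Hom(W, R₁) ≠ 0` when restricted to `B`. Its kernel `M` is the stabilizer of `W`, hence a proper
subalgebra of finite codimension with `A = B + M`. A maximal subalgebra containing `M` cannot
contain `B`.
-/

lemma surjective_of_flip_injective_of_finrank_eq_one {K V W L : Type*} [Field K]
    [AddCommGroup V] [Module K V] [AddCommGroup W] [Module K W] [AddCommGroup L] [Module K L]
    [FiniteDimensional K W] (hL : Module.finrank K L = 1) {β : V →ₗ[K] W →ₗ[K] L}
    (hβ : Function.Injective β.flip) : Function.Surjective β := by
  obtain ⟨l⟩ := Module.nonempty_linearEquiv_of_finrank_eq_one hL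
  have hflip : Function.Injective (β.compr₂ l.symm.toLinearMap).flip := fun w₁ w₂ h =>
    hβ <| LinearMap.ext fun v => l.symm.injective (LinearMap.congr_fun h v)
  intro φ
  obtain ⟨v, hv⟩ := LinearMap.flip_injective_iff₂.1 hflip (l.symm.toLinearMap ∘ₗ φ)
  exact ⟨v, LinearMap.ext fun w => l.symm.injective (LinearMap.congr_fun hv w)⟩

section OffDiagonalBlock

variable {K E : Type*} [Field K] [AddCommGroup E] [Module K E] {R V : Submodule K E}

/-- The off-diagonal block of an endomorphism `g` with respect to a decomposition `E = R ⊕ V`: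
the composite of the restriction of `g` to `U ⊓ V` and the projection onto `R`. It is the
obstruction to `U ⊓ V` being stable under an endomorphism that preserves `U`. -/
noncomputable def offDiagonalBlock (U : Submodule K E) (hV : IsCompl R V) :
    Module.End K E →ₗ[K] ↥(U ⊓ V) →ₗ[K] R :=
  (LinearMap.lcomp K R (U ⊓ V).subtype) ∘ₗ (R.projectionOnto V hV).compRight K

lemma offDiagonalBlock_apply_eq_zero_iff {U : Submodule K E} {hV : IsCompl R V}
    {g : Module.End K E} {w : ↥(U ⊓ V)} : offDiagonalBlock U hV g w = 0 ↔ g w ∈ V :=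
  R.projectionOnto_apply_eq_zero_iff hV

lemma offDiagonalBlock_eq_zero_iff {U : Submodule K E} {hV : IsCompl R V} {g : Module.End K E}
    (hg : U ∈ g.invtSubmodule) : offDiagonalBlock U hV g = 0 ↔ U ⊓ V ∈ g.invtSubmodule := by
  refine ⟨fun h w hw => ⟨hg hw.1, ?_⟩, fun h => LinearMap.ext fun w => ?_⟩
  · exact offDiagonalBlock_apply_eq_zero_iff.1 (LinearMap.congr_fun h ⟨w, hw⟩)
  · exact offDiagonalBlock_apply_eq_zero_iff.2 (h w.2).2

end OffDiagonalBlock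

namespace LeibnizMul

variable {K A B : Type*} [Field K] [AddCommGroup A] [Module K A] [AddCommGroup B] [Module K B]

section RightCenterSeries

variable {m : LeibnizMul K B}

lemma mem_rightCenter {r : B} : r ∈ m.rightCenter ↔ ∀ x, m.mul x r = 0 := by
  simp only [rightCenter, LinearMap.mem_ker, LinearMap.ext_iff, LinearMap.flip_apply,
    LinearMap.zero_apply]

/-- The ascending series of right centers `R_j(B)`, started at `R_0(B) = 0` so that
`R_1(B)` is the right center. -/
def rightCenterSeries (m : LeibnizMul K B) : ℕ → Submodule K B
  | 0 => ⊥
  | j + 1 => ⨅ x, (m.rightCenterSeries j).comap (m.mul x)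

lemma mem_rightCenterSeries_succ {j : ℕ} {r : B} :
    r ∈ m.rightCenterSeries (j + 1) ↔ ∀ x, m.mul x r ∈ m.rightCenterSeries j := by
  simp only [rightCenterSeries, Submodule.mem_iInf, Submodule.mem_comap]

lemma rightCenterSeries_one : m.rightCenterSeries 1 = m.rightCenter := by
  ext r
  rw [mem_rightCenterSeries_succ, mem_rightCenter]
  rfl

lemma mem_rightCenterSeries_two {r : B} :
    r ∈ m.rightCenterSeries 2 ↔ ∀ x, m.mul x r ∈ m.rightCenter := by
  rw [mem_rightCenterSeries_succ, rightCenterSeries_one]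

lemma rightCenterSeries_le_succ (j : ℕ) :
    m.rightCenterSeries j ≤ m.rightCenterSeries (j + 1) := by
  induction j with
  | zero => exact bot_le
  | succ j ih =>
    exact fun r hr => mem_rightCenterSeries_succ.2 fun x => ih (mem_rightCenterSeries_succ.1 hr x)

lemma IsNilpotent.rightCenterSeries_lt_succ (hnil : m.IsNilpotent) {j : ℕ}
    (hj : m.rightCenterSeries j ≠ ⊤) :
    m.rightCenterSeries j < m.rightCenterSeries (j + 1) := by
  refine (rightCenterSeries_le_succ j).lt_of_not_ge fun hle => hj ?_
  have top_of_lcs_le : ∀ n, m.lcsIn ⊤ n ≤ m.rightCenterSeries j → m.rightCenterSeries j = ⊤ := by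
    intro n
    induction n with
    | zero => exact top_le_iff.1
    | succ n ih =>
      refine fun hn => ih fun y hy => hle (mem_rightCenterSeries_succ.2 fun x => hn ?_)
      exact Submodule.subset_span ⟨x, Submodule.mem_top, y, hy, rfl⟩
  obtain ⟨n, hn⟩ := hnil
  exact top_of_lcs_le n (hn ▸ bot_le)

lemma IsNilpotent.rightCenter_lt_rightCenterSeries_two (hnil : m.IsNilpotent)
    (h : m.rightCenter ≠ ⊤) : m.rightCenter < m.rightCenterSeries 2 := by
  rw [← rightCenterSeries_one] at h ⊢
  exact hnil.rightCenterSeries_lt_succ h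

/-- A derivation of the Leibniz algebra `B`, such as any left multiplication of `B` or of an
algebra containing `B` as a left ideal. -/
def IsDerivation (m : LeibnizMul K B) (D : Module.End K B) : Prop :=
  ∀ x y, D (m.mul x y) = m.mul (D x) y + m.mul x (D y)

lemma IsDerivation.rightCenterSeries_mem_invtSubmodule {D : Module.End K B}
    (hD : m.IsDerivation D) (j : ℕ) : m.rightCenterSeries j ∈ D.invtSubmodule := by
  induction j with
  | zero => exact Module.End.invtSubmodule.bot_mem D
  | succ j ih =>
    intro r hr
    rw [mem_rightCenterSeries_succ] at hr
    refine mem_rightCenterSeries_succ.2 fun x => ?_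
    rw [← sub_eq_of_eq_add' (hD x r)]
    exact sub_mem (ih (hr x)) (hr (D x))

end RightCenterSeries

section Pairing

variable {m : LeibnizMul K B} {V : Submodule K B}

lemma flip_offDiagonalBlock_comp_mul_injective (hV : IsCompl m.rightCenter V) :
    Function.Injective (offDiagonalBlock (m.rightCenterSeries 2) hV ∘ₗ m.mul).flip := by
  refine (injective_iff_map_eq_zero _).2 fun w hw => Subtype.ext ?_
  have hw₁ : (w : B) ∈ m.rightCenter := mem_rightCenter.2 fun b => by
    have hbV : m.mul b w ∈ V := offDiagonalBlock_apply_eq_zero_iff.1 (LinearMap.congr_fun hw b)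
    exact Submodule.disjoint_def.1 hV.disjoint _ (mem_rightCenterSeries_two.1 w.2.1 b) hbV
  exact Submodule.disjoint_def.1 hV.disjoint _ hw₁ w.2.2

lemma offDiagonalBlock_comp_mul_surjective [FiniteDimensional K (m.rightCenterSeries 2)]
    (hr : Module.finrank K m.rightCenter = 1) (hV : IsCompl m.rightCenter V) :
    Function.Surjective (offDiagonalBlock (m.rightCenterSeries 2) hV ∘ₗ m.mul) :=
  have : FiniteDimensional K ↥(m.rightCenterSeries 2 ⊓ V) :=
    Submodule.finiteDimensional_inf_left _ _
  surjective_of_flip_injective_of_finrank_eq_one hr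
    (flip_offDiagonalBlock_comp_mul_injective hV)

end Pairing

section LeftIdeal

/-- A left ideal of a Leibniz algebra, that is, a subspace on which the algebra acts by left
multiplications. -/
def IsLeftIdeal (m : LeibnizMul K A) (S : Submodule K A) : Prop :=
  ∀ (x : A), ∀ y ∈ S, m.mul x y ∈ S

variable {mA : LeibnizMul K A} {mB : LeibnizMul K B} {e : B →ₗ[K] A}

/-- The map `a ↦` (left multiplication by `a` restricted to `B`), whose image is `E(B, A)`,
for a left ideal given as the range of an injective map `e : B → A`. -/
noncomputable def leftAction (he : Function.Injective e)
    (hI : mA.IsLeftIdeal (LinearMap.range e)) : A →ₗ[K] Module.End K B :=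
  have apply_symm (y : LinearMap.range e) : e ((LinearEquiv.ofInjective e he).symm y) = y :=
    congrArg Subtype.val ((LinearEquiv.ofInjective e he).apply_symm_apply y)
  LinearMap.mk₂ K
    (fun a b => (LinearEquiv.ofInjective e he).symm ⟨mA.mul a (e b), hI a _ ⟨b, rfl⟩⟩)
    (fun _ _ _ => he (by simp [apply_symm])) (fun _ _ _ => he (by simp [apply_symm]))
    (fun _ _ _ => he (by simp [apply_symm])) (fun _ _ _ => he (by simp [apply_symm]))

variable (he : Function.Injective e) (hI : mA.IsLeftIdeal (LinearMap.range e))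

lemma apply_leftAction (a : A) (b : B) : e (leftAction he hI a b) = mA.mul a (e b) :=
  congrArg Subtype.val ((LinearEquiv.ofInjective e he).apply_symm_apply _)

lemma leftAction_mul (a b : A) :
    leftAction he hI (mA.mul a b) = ⁅leftAction he hI a, leftAction he hI b⁆ :=
  LinearMap.ext fun y => he <| by
    simp [Ring.lie_def, apply_leftAction, mA.leibniz a b]

lemma leftAction_comp (hmul : ∀ x y, e (mB.mul x y) = mA.mul (e x) (e y)) :
    leftAction he hI ∘ₗ e = mB.mul :=
  LinearMap.ext₂ fun x y => he <| by rw [LinearMap.comp_apply, apply_leftAction, hmul]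

lemma isDerivation_leftAction (hmul : ∀ x y, e (mB.mul x y) = mA.mul (e x) (e y)) (a : A) :
    mB.IsDerivation (leftAction he hI a) := fun x y => he <| by
  simp only [apply_leftAction, hmul, map_add, mA.leibniz a]

lemma isSubalg_ker_offDiagonalBlock_comp_leftAction {U R V : Submodule K B}
    (hV : IsCompl R V) (hU : ∀ a, U ∈ (leftAction he hI a).invtSubmodule) :
    mA.IsSubalg (LinearMap.ker (offDiagonalBlock U hV ∘ₗ leftAction he hI)) := by
  have mem_ker (a : A) : a ∈ LinearMap.ker (offDiagonalBlock U hV ∘ₗ leftAction he hI) ↔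
      U ⊓ V ∈ (leftAction he hI a).invtSubmodule :=
    offDiagonalBlock_eq_zero_iff (hU a)
  intro a ha b hb
  rw [mem_ker] at ha hb ⊢
  rw [leftAction_mul]
  exact fun w hw => (U ⊓ V).sub_mem (ha (hb hw)) (hb (ha hw))

end LeftIdeal

section Frattini

variable {m : LeibnizMul K A} {M I : Submodule K A}

lemma IsSubalg.exists_le_isMaxSubalg (hM : m.IsSubalg M) (hfin : M.CoFG) (hne : M ≠ ⊤) :
    ∃ N, m.IsMaxSubalg N ∧ M ≤ N := by
  obtain ⟨N, ⟨hN, hNne, hMN⟩, hmax⟩ := exists_maximalFor_of_wellFoundedGT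
    (fun S => m.IsSubalg S ∧ S ≠ ⊤ ∧ M ≤ S) (Submodule.map M.mkQ) ⟨M, hM, hne, le_rfl⟩
  refine ⟨N, ⟨hN, hNne, fun S hS hNS => ?_⟩, hMN⟩
  by_contra hSne
  have hSN : S.map M.mkQ ≤ N.map M.mkQ :=
    hmax ⟨hS, hSne, hMN.trans hNS.le⟩ (Submodule.map_mono hNS.le)
  rw [LinearMap.map_le_map_iff, Submodule.ker_mkQ, sup_eq_left.2 hMN] at hSN
  exact hNS.not_ge hSN

lemma IsSubalg.not_le_frattini (hM : m.IsSubalg M) (hfin : M.CoFG) (hne : M ≠ ⊤)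
    (hIM : Codisjoint I M) : ¬ I ≤ m.frattini := by
  intro hI
  obtain ⟨N, hN, hMN⟩ := hM.exists_le_isMaxSubalg hfin hne
  exact hN.2.1 (top_le_iff.1 (hIM.top_le.trans (sup_le (hI.trans (sInf_le hN)) hMN)))

lemma not_range_le_frattini_of_comp_surjective {H : Type*} [AddCommGroup H] [Module K H]
    [FiniteDimensional K H] [Nontrivial H] {T : A →ₗ[K] H} {e : B →ₗ[K] A}
    (hT : m.IsSubalg (LinearMap.ker T)) (hTe : Function.Surjective (T ∘ₗ e)) :
    ¬ LinearMap.range e ≤ m.frattini := by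
  refine hT.not_le_frattini (.ker T) ?_ ?_
  · obtain ⟨h, hh⟩ := exists_ne (0 : H)
    obtain ⟨b, rfl⟩ := hTe h
    exact fun htop => hh (LinearMap.mem_ker.1 (htop ▸ Submodule.mem_top : e b ∈ LinearMap.ker T))
  · rw [codisjoint_iff, ← Submodule.comap_map_eq, ← LinearMap.range_comp,
      LinearMap.range_eq_top.2 hTe, Submodule.comap_top]

end Frattini

end LeibnizMul

open LeibnizMul in
theorem stmt19_general {K B A : Type*} [Field K] [AddCommGroup B] [Module K B]
    [AddCommGroup A] [Module K A] (mB : LeibnizMul K B)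
    [FiniteDimensional K (mB.rightCenterSeries 2)]
    (hr : Module.finrank K mB.rightCenter = 1) (hlt : mB.rightCenter < mB.rightCenterSeries 2)
    (mA : LeibnizMul K A) {e : B →ₗ[K] A} (he : Function.Injective e)
    (hmul : ∀ x y, e (mB.mul x y) = mA.mul (e x) (e y))
    (hI : mA.IsLeftIdeal (LinearMap.range e)) : ¬ LinearMap.range e ≤ mA.frattini := by
  obtain ⟨V, hV⟩ := exists_isCompl mB.rightCenter
  let T := offDiagonalBlock (mB.rightCenterSeries 2) hV ∘ₗ leftAction he hI
  have hsub : mA.IsSubalg (LinearMap.ker T) :=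
    isSubalg_ker_offDiagonalBlock_comp_leftAction he hI hV fun a =>
      (isDerivation_leftAction he hI hmul a).rightCenterSeries_mem_invtSubmodule 2
  have hsurj : Function.Surjective (T ∘ₗ e) := by
    rw [LinearMap.comp_assoc, leftAction_comp he hI hmul]
    exact offDiagonalBlock_comp_mul_surjective hr hV
  have hW : mB.rightCenterSeries 2 ⊓ V ≠ ⊥ := fun h => hlt.ne <|
    eq_of_le_of_inf_le_of_le_sup hlt.le (h.trans_le bot_le) (hV.sup_eq_top ▸ le_top)
  have : Nontrivial ↥(mB.rightCenterSeries 2 ⊓ V) := Submodule.nontrivial_iff_ne_bot.2 hW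
  have : Nontrivial mB.rightCenter := Module.nontrivial_of_finrank_eq_succ hr
  have : FiniteDimensional K mB.rightCenter := Module.finite_of_finrank_eq_succ hr
  have : FiniteDimensional K ↥(mB.rightCenterSeries 2 ⊓ V) :=
    Submodule.finiteDimensional_inf_left _ _
  exact not_range_le_frattini_of_comp_surjective hsub hsurj

/-- a nilpotent Leibniz algebra `B` with `dim B ≥ 2` and one-dimensional
right center cannot be an ideal of any Leibniz algebra `A` with `B ⊆ Φ(A)`. -/
theorem stmt19 {K B : Type*} [Field K] [AddCommGroup B] [Module K B] [FiniteDimensional K B]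
    (mB : LeibnizMul K B) (hnil : mB.IsNilpotent)
    (hdim : 2 ≤ Module.finrank K B)
    (hr : Module.finrank K ↥mB.rightCenter = 1) :
    ∀ (A : Type*) [AddCommGroup A] [Module K A] (mA : LeibnizMul K A),
      ¬ ∃ e : B →ₗ[K] A, Function.Injective e ∧
          (∀ x y, e (mB.mul x y) = mA.mul (e x) (e y)) ∧
          mA.IsIdeal (LinearMap.range e) ∧
          LinearMap.range e ≤ mA.frattini := by
  rintro A _ _ mA ⟨e, he, hmul, hI, hfrat⟩
  have hne : mB.rightCenter ≠ ⊤ :=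
    (Submodule.lt_top_of_finrank_lt_finrank (hr.trans_lt hdim)).ne
  exact stmt19_general mB hr (hnil.rightCenter_lt_rightCenterSeries_two hne) mA he hmul
    (fun a y hy => (hI a y hy).1) hfrat
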